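/- arXiv:2509.09287 — 4 statements merged into one kernel-verified Lean document; each statement's English description precedes it below -/
import Mathlib

section
/- Let X be a real Banach space, let f : X → ℝ be locally Lipschitz, and let x, v ∈ X. Then the Clarke generalized directional derivative is realized as a maximum over the Clarke subdifferential: there exists ζ ∈ ∂f(x) with ⟨ζ, v⟩ = f⁰(x; v), and consequently f⁰(x; v) = max_{ζ ∈ ∂f(x)} ⟨ζ, v⟩. -/
open Filter Topology

/-- The Clarke generalized directional derivative of `f` at `x` in the direction `v`:
`f⁰(x; v) = limsup_{y → x, λ ↓ 0} (f (y + λ v) - f y) / λ`. -/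
noncomputable def clarkeDeriv {X : Type*} [NormedAddCommGroup X] [NormedSpace ℝ X]
    (f : X → ℝ) (x v : X) : ℝ :=
  Filter.limsup (fun p : X × ℝ => (f (p.1 + p.2 • v) - f p.1) / p.2)
    ((𝓝 x) ×ˢ (𝓝[>] (0 : ℝ)))

/-- The Clarke subdifferential of `f` at `x`, a subset of the continuous dual of `X`:
`∂f(x) = {ζ ∈ X* : ⟨ζ, v⟩ ≤ f⁰(x; v) for all v}`. -/
def clarkeSubdiff {X : Type*} [NormedAddCommGroup X] [NormedSpace ℝ X]
    (f : X → ℝ) (x : X) : Set (X →L[ℝ] ℝ) :=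
  {ζ | ∀ v : X, ζ v ≤ clarkeDeriv f x v}

/-!
Near `x` the difference quotients of `f` in the direction `v` are bounded by `K * ‖v‖`, so
`f⁰(x; ·)` is finite and at most `K * ‖·‖`. It is sublinear: positive homogeneity is the
substitution `λ ↦ c * λ`, and subadditivity follows by splitting the increment along `v + w` at
the point `y + λ w`, which still tends to `x`. Hahn–Banach then extends the linear functional
`c • v ↦ c * f⁰(x; v)` on the line through `v` to one dominated by `f⁰(x; ·)`, and the bound
`K * ‖·‖` makes the extension continuous.
-/

section Sublinear

theorem apply_zero_of_pos_homogeneous {E : Type*} [Zero E] [SMulZeroClass ℝ E] {N : E → ℝ}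
    (N_hom : ∀ c : ℝ, 0 < c → ∀ x, N (c • x) = c * N x) : N 0 = 0 := by
  have h := N_hom 2 two_pos 0
  rw [smul_zero] at h
  linarith

theorem mul_le_apply_smul_of_sublinear {E : Type*} [AddCommGroup E] [Module ℝ E] {N : E → ℝ}
    (N_hom : ∀ c : ℝ, 0 < c → ∀ x, N (c • x) = c * N x) (N_add : ∀ x y, N (x + y) ≤ N x + N y)
    (v : E) (c : ℝ) : c * N v ≤ N (c • v) := by
  have N_zero := apply_zero_of_pos_homogeneous N_hom
  rcases lt_trichotomy c 0 with hc | rfl | hc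
  · have h : N 0 ≤ N (c • v) + -c * N v := by
      simpa only [N_hom (-c) (neg_pos.2 hc), ← add_smul, add_neg_cancel, zero_smul]
        using N_add (c • v) (-c • v)
    linarith
  · rw [zero_mul, zero_smul, N_zero]
  · exact (N_hom c hc v).ge

theorem exists_linearMap_le_sublinear_eq {E : Type*} [AddCommGroup E] [Module ℝ E] {N : E → ℝ}
    (N_hom : ∀ c : ℝ, 0 < c → ∀ x, N (c • x) = c * N x) (N_add : ∀ x y, N (x + y) ≤ N x + N y)
    (v : E) : ∃ g : E →ₗ[ℝ] ℝ, (∀ w, g w ≤ N w) ∧ g v = N v := by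
  have line_wd : ∀ c : ℝ, c • v = 0 → c • N v = 0 := by
    intro c hc
    rcases smul_eq_zero.1 hc with rfl | rfl
    · exact zero_smul ℝ _
    · rw [apply_zero_of_pos_homogeneous N_hom, smul_zero]
  obtain ⟨g, g_eq, g_le⟩ := exists_extension_of_le_sublinear
    (LinearPMap.mkSpanSingleton' v (N v) line_wd) N N_hom N_add (by
      rintro ⟨w, hw⟩
      obtain ⟨c, rfl⟩ := Submodule.mem_span_singleton.1 hw
      rw [LinearPMap.mkSpanSingleton'_apply]
      exact mul_le_apply_smul_of_sublinear N_hom N_add v c)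
  exact ⟨g, g_le, (g_eq ⟨v, Submodule.mem_span_singleton_self v⟩).trans
    (LinearPMap.mkSpanSingleton'_apply_self v _ line_wd _)⟩

theorem exists_continuousLinearMap_le_sublinear_eq {E : Type*} [SeminormedAddCommGroup E]
    [NormedSpace ℝ E] {N : E → ℝ} {K : ℝ}
    (N_hom : ∀ c : ℝ, 0 < c → ∀ x, N (c • x) = c * N x) (N_add : ∀ x y, N (x + y) ≤ N x + N y)
    (N_le : ∀ x, N x ≤ K * ‖x‖) (v : E) :
    ∃ ζ : E →L[ℝ] ℝ, (∀ w, ζ w ≤ N w) ∧ ζ v = N v := by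
  obtain ⟨g, g_le, g_eq⟩ := exists_linearMap_le_sublinear_eq N_hom N_add v
  have g_le_norm (w : E) : g w ≤ K * ‖w‖ := (g_le w).trans (N_le w)
  have abs_g_le (w : E) : |g w| ≤ K * ‖w‖ :=
    abs_le'.2 ⟨g_le_norm w, by simpa only [map_neg, norm_neg] using g_le_norm (-w)⟩
  exact ⟨g.mkContinuous K abs_g_le, g_le, g_eq⟩

end Sublinear

section Scaling

open scoped Pointwise in
theorem limsup_const_mul_of_pos {α : Type*} {c : ℝ} (hc : 0 < c) (u : α → ℝ) (l : Filter α) :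
    limsup (fun a => c * u a) l = c * limsup u l := by
  -- Scaling by `c` commutes with `sInf` on `ℝ` even where the latter takes its junk value `0`.
  have upper_bounds : {b | ∀ᶠ a in l, c * u a ≤ b} = c • {b | ∀ᶠ a in l, u a ≤ b} := by
    ext b
    simp only [Set.mem_smul_set_iff_inv_smul_mem₀ hc.ne', Set.mem_ofPred_eq, smul_eq_mul,
      le_inv_mul_iff₀ hc]
  rw [limsup_eq, limsup_eq, upper_bounds, Real.sInf_smul_of_nonneg hc.le, smul_eq_mul]

theorem map_mul_left_nhdsGT_zero {𝕜 : Type*} [Field 𝕜] [LinearOrder 𝕜] [IsStrictOrderedRing 𝕜]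
    [TopologicalSpace 𝕜] [OrderTopology 𝕜] {c : 𝕜} (hc : 0 < c) :
    map (c * ·) (𝓝[>] 0) = 𝓝[>] 0 := by
  conv_lhs => rw [← comap_mulLeft_nhdsGT_zero hc]
  exact map_comap_of_surjective (mul_left_surjective₀ hc.ne') _

end Scaling

section ClarkeFilter

variable {E : Type*} [TopologicalSpace E]

/-- The filter on pairs `(y, λ)` expressing `y → x`, `λ ↓ 0`, along which `clarkeDeriv` is the upper
limit of `clarkeQuotient`. -/
def clarkeFilter (x : E) : Filter (E × ℝ) := 𝓝 x ×ˢ 𝓝[>] 0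

instance clarkeFilter_neBot (x : E) : (clarkeFilter x).NeBot :=
  inferInstanceAs (𝓝 x ×ˢ 𝓝[>] (0 : ℝ)).NeBot

theorem map_mul_snd_clarkeFilter (x : E) {c : ℝ} (hc : 0 < c) :
    map (Prod.map id (c * ·)) (clarkeFilter x) = clarkeFilter x := by
  rw [clarkeFilter, ← prod_map_map_eq', map_id, map_mul_left_nhdsGT_zero hc]

theorem tendsto_add_smul_clarkeFilter [AddMonoid E] [ContinuousAdd E] [SMulWithZero ℝ E]
    [ContinuousSMul ℝ E] (x w : E) :
    Tendsto (fun p : E × ℝ => (p.1 + p.2 • w, p.2)) (clarkeFilter x) (clarkeFilter x) := by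
  have fst_tendsto : Tendsto Prod.fst (clarkeFilter x) (𝓝 x) := tendsto_fst
  have snd_tendsto : Tendsto Prod.snd (clarkeFilter x) (𝓝 0) :=
    tendsto_snd.mono_right nhdsWithin_le_nhds
  refine Tendsto.prodMk ?_ tendsto_snd
  simpa only [zero_smul, add_zero] using fst_tendsto.add (snd_tendsto.smul_const w)

end ClarkeFilter

section ClarkeQuotient

variable {E : Type*} [AddCommGroup E] [Module ℝ E]

/-- The difference quotient whose upper limit is `clarkeDeriv`; the pair `p` is `(y, λ)`. -/
noncomputable def clarkeQuotient (f : E → ℝ) (v : E) (p : E × ℝ) : ℝ :=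
  (f (p.1 + p.2 • v) - f p.1) / p.2

theorem clarkeQuotient_add (f : E → ℝ) (v w : E) (p : E × ℝ) :
    clarkeQuotient f (v + w) p =
      clarkeQuotient f v (p.1 + p.2 • w, p.2) + clarkeQuotient f w p := by
  have split_increment : p.1 + p.2 • (v + w) = p.1 + p.2 • w + p.2 • v := by module
  simp only [clarkeQuotient, split_increment]
  ring

theorem clarkeQuotient_smul (f : E → ℝ) {c : ℝ} (hc : c ≠ 0) (v : E) (p : E × ℝ) :
    clarkeQuotient f (c • v) p = c * clarkeQuotient f v (p.1, c * p.2) := by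
  simp only [clarkeQuotient, smul_smul, mul_comm p.2 c]
  rw [← mul_div_assoc, mul_div_mul_left _ _ hc]

end ClarkeQuotient

section ClarkeDeriv

variable {X : Type*} [NormedAddCommGroup X] [NormedSpace ℝ X]

theorem clarkeDeriv_eq_limsup (f : X → ℝ) (x v : X) :
    clarkeDeriv f x v = limsup (clarkeQuotient f v) (clarkeFilter x) :=
  rfl

theorem clarkeDeriv_smul_of_pos (f : X → ℝ) (x : X) {c : ℝ} (hc : 0 < c) (v : X) :
    clarkeDeriv f x (c • v) = c * clarkeDeriv f x v := by
  calc clarkeDeriv f x (c • v)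
      = limsup (fun p => c * (clarkeQuotient f v ∘ Prod.map id (c * ·)) p) (clarkeFilter x) :=
        limsup_congr (.of_forall (clarkeQuotient_smul f hc.ne' v))
    _ = c * limsup (clarkeQuotient f v) (map (Prod.map id (c * ·)) (clarkeFilter x)) :=
        limsup_const_mul_of_pos hc _ _
    _ = c * clarkeDeriv f x v := by rw [map_mul_snd_clarkeFilter x hc, clarkeDeriv_eq_limsup]

variable {f : X → ℝ} {x : X} {K : NNReal} {s : Set X}

theorem eventually_abs_clarkeQuotient_le (hf : LipschitzOnWith K f s) (hs : s ∈ 𝓝 x) (v : X) :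
    ∀ᶠ p in clarkeFilter x, |clarkeQuotient f v p| ≤ K * ‖v‖ := by
  have base_mem : ∀ᶠ p in clarkeFilter x, p.1 ∈ s := tendsto_fst.eventually hs
  have step_mem := (tendsto_add_smul_clarkeFilter x v).eventually base_mem
  have step_pos : ∀ᶠ p in clarkeFilter x, 0 < p.2 := tendsto_snd.eventually self_mem_nhdsWithin
  filter_upwards [base_mem, step_mem, step_pos] with ⟨y, t⟩ hy hyt ht
  rw [clarkeQuotient, abs_div, abs_of_pos ht, div_le_iff₀ ht]
  calc |f (y + t • v) - f y|
      ≤ K * ‖y + t • v - y‖ := hf.norm_sub_le hyt hy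
    _ = K * ‖v‖ * t := by rw [add_sub_cancel_left, norm_smul_of_nonneg ht.le]; ring

theorem isBoundedUnder_le_clarkeQuotient (hf : LipschitzOnWith K f s) (hs : s ∈ 𝓝 x) (v : X) :
    IsBoundedUnder (· ≤ ·) (clarkeFilter x) (clarkeQuotient f v) :=
  isBoundedUnder_of_eventually_le <|
    (eventually_abs_clarkeQuotient_le hf hs v).mono fun _ hp => (abs_le.1 hp).2

theorem isBoundedUnder_ge_clarkeQuotient (hf : LipschitzOnWith K f s) (hs : s ∈ 𝓝 x) (v : X) :
    IsBoundedUnder (· ≥ ·) (clarkeFilter x) (clarkeQuotient f v) :=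
  isBoundedUnder_of_eventually_ge <|
    (eventually_abs_clarkeQuotient_le hf hs v).mono fun _ hp => (abs_le.1 hp).1

theorem clarkeDeriv_le_mul_norm (hf : LipschitzOnWith K f s) (hs : s ∈ 𝓝 x) (v : X) :
    clarkeDeriv f x v ≤ K * ‖v‖ :=
  limsup_le_of_le (isBoundedUnder_ge_clarkeQuotient hf hs v).isCoboundedUnder_le <|
    (eventually_abs_clarkeQuotient_le hf hs v).mono fun _ hp => (abs_le.1 hp).2

theorem clarkeDeriv_add_le (hf : LipschitzOnWith K f s) (hs : s ∈ 𝓝 x) (v w : X) :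
    clarkeDeriv f x (v + w) ≤ clarkeDeriv f x v + clarkeDeriv f x w := by
  let shift : X × ℝ → X × ℝ := fun p => (p.1 + p.2 • w, p.2)
  have tendsto_shift : Tendsto shift (clarkeFilter x) (clarkeFilter x) :=
    tendsto_add_smul_clarkeFilter x w
  have bddAbove := isBoundedUnder_le_clarkeQuotient hf hs
  have bddBelow := isBoundedUnder_ge_clarkeQuotient hf hs
  have shift_bddAbove := tendsto_shift.isBoundedUnder_comp (bddAbove v)
  have shift_bddBelow := tendsto_shift.isBoundedUnder_comp (bddBelow v)
  calc clarkeDeriv f x (v + w)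
      = limsup (clarkeQuotient f v ∘ shift + clarkeQuotient f w) (clarkeFilter x) :=
        limsup_congr (.of_forall (clarkeQuotient_add f v w))
    _ ≤ limsup (clarkeQuotient f v ∘ shift) (clarkeFilter x) + clarkeDeriv f x w :=
        limsup_add_le shift_bddBelow shift_bddAbove (bddBelow w).isCoboundedUnder_le (bddAbove w)
    _ ≤ clarkeDeriv f x v + clarkeDeriv f x w := by
        gcongr
        exact tendsto_shift.limsup_comp_le_limsup shift_bddBelow.isCoboundedUnder_le (bddAbove v)

theorem clarkeDeriv_eq_max_clarkeSubdiff_general (hf : LipschitzOnWith K f s) (hs : s ∈ 𝓝 x)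
    (v : X) :
    IsGreatest ((fun ζ : X →L[ℝ] ℝ => ζ v) '' clarkeSubdiff f x) (clarkeDeriv f x v) := by
  constructor
  · exact exists_continuousLinearMap_le_sublinear_eq
      (fun _ hc => clarkeDeriv_smul_of_pos f x hc) (clarkeDeriv_add_le hf hs)
      (clarkeDeriv_le_mul_norm hf hs) v
  · rintro _ ⟨ζ, hζ, rfl⟩
    exact hζ v

end ClarkeDeriv

/-- The Clarke generalized directional derivative is attained as the maximum of `⟨ζ, v⟩`
over the Clarke subdifferential: `f⁰(x; v) = max_{ζ ∈ ∂f(x)} ⟨ζ, v⟩`. -/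
theorem clarkeDeriv_eq_max_clarkeSubdiff
    {X : Type*} [NormedAddCommGroup X] [NormedSpace ℝ X] [CompleteSpace X]
    (f : X → ℝ) (hf : LocallyLipschitz f) (x v : X) :
    IsGreatest ((fun ζ : X →L[ℝ] ℝ => ζ v) '' clarkeSubdiff f x) (clarkeDeriv f x v) := by
  obtain ⟨K, s, hs, hfs⟩ := hf x
  exact clarkeDeriv_eq_max_clarkeSubdiff_general hfs hs v
end

section
/- Let O be a bounded open subset of ℝ^d, let r ≥ 1 be real, and let u, v ∈ L^{r+1}(O; ℝ^d). Then the function x ↦ (|u(x)|^{r−1}u(x) − |v(x)|^{r−1}v(x))·(u(x) − v(x)) is integrable on O and ∫_O (|u|^{r−1}u − |v|^{r−1}v)·(u − v) dx ≥ (1/2)∫_O |u|^{r−1}|u − v|² dx + (1/2)∫_O |v|^{r−1}|u − v|² dx ≥ 0. -/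
open Filter Topology MeasureTheory
open scoped RealInnerProductSpace

/-!
For any real weights `a` and `b`, expanding the inner product gives
`⟪a x - b y, x - y⟫ = (a / 2) ‖x - y‖² + (b / 2) ‖x - y‖² + (1 / 2) (a - b) (‖x‖² - ‖y‖²)`.
When `a = φ ‖x‖` and `b = φ ‖y‖` with `φ` nondecreasing, the last term is nonnegative. For
`φ t = t ^ (r - 1)`, every term is a combination of products `‖f‖ ^ (r - 1) ‖g‖²` with
`f, g ∈ L^{r+1}`, which are integrable because they are at most `max ‖f‖ ‖g‖ ^ (r + 1)`.
-/

section Pointwise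

variable {E : Type*} [NormedAddCommGroup E] [InnerProductSpace ℝ E]

lemma inner_smul_sub_smul_sub_eq (a b : ℝ) (x y : E) :
    ⟪a • x - b • y, x - y⟫ =
      (1 / 2) * (a * ‖x - y‖ ^ 2) + (1 / 2) * (b * ‖x - y‖ ^ 2) +
        (1 / 2) * ((a - b) * (‖x‖ ^ 2 - ‖y‖ ^ 2)) := by
  simp only [norm_sub_sq_real, inner_sub_left, inner_sub_right, real_inner_smul_left,
    real_inner_self_eq_norm_sq, real_inner_comm x y]
  ring

lemma le_inner_smul_sub_smul_sub_of_monotoneOn {φ : ℝ → ℝ} (hφ : MonotoneOn φ (Set.Ici 0))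
    (x y : E) :
    (1 / 2) * (φ ‖x‖ * ‖x - y‖ ^ 2) + (1 / 2) * (φ ‖y‖ * ‖x - y‖ ^ 2) ≤
      ⟪φ ‖x‖ • x - φ ‖y‖ • y, x - y⟫ := by
  have hsq : MonotoneOn (fun t : ℝ => t ^ 2) (Set.Ici 0) := fun _ hs _ _ hst =>
    pow_le_pow_left₀ hs hst 2
  have hcross : 0 ≤ (φ ‖x‖ - φ ‖y‖) * (‖x‖ ^ 2 - ‖y‖ ^ 2) :=
    (hφ.monovaryOn hsq).sub_mul_sub_nonneg (norm_nonneg y) (norm_nonneg x)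
  rw [inner_smul_sub_smul_sub_eq]
  linarith

end Pointwise

lemma rpow_mul_rpow_le_max_rpow {a b p q : ℝ} (ha : 0 ≤ a) (hb : 0 ≤ b) (hp : 0 ≤ p)
    (hq : 0 ≤ q) : a ^ p * b ^ q ≤ max a b ^ (p + q) := by
  rw [Real.rpow_add_of_nonneg (le_max_of_le_left ha) hp hq]
  gcongr
  · exact le_max_left a b
  · exact le_max_right a b

section Integral

variable {α E F : Type*} [MeasurableSpace α] {μ : Measure α}

lemma integrable_norm_rpow_mul_norm_rpow [NormedAddCommGroup E] [NormedAddCommGroup F]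
    {p q : ℝ} (hp : 0 ≤ p) (hq : 0 ≤ q) (hpq : 0 < p + q) {f : α → E} {g : α → F}
    (hf : MemLp f (ENNReal.ofReal (p + q)) μ) (hg : MemLp g (ENNReal.ofReal (p + q)) μ) :
    Integrable (fun x => ‖f x‖ ^ p * ‖g x‖ ^ q) μ := by
  have hmax : Integrable (fun x => max ‖f x‖ ‖g x‖ ^ (p + q)) μ := by
    have h := (hf.norm.sup hg.norm).integrable_norm_rpow (by simpa using hpq)
      ENNReal.ofReal_ne_top
    simpa only [Pi.sup_apply, Real.norm_of_nonneg (le_max_of_le_left (norm_nonneg _)),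
      ENNReal.toReal_ofReal hpq.le] using h
  refine hmax.mono' ?_ (.of_forall fun x => ?_)
  · exact ((hf.1.norm.aemeasurable.pow_const p).mul
      (hg.1.norm.aemeasurable.pow_const q)).aestronglyMeasurable
  · rw [Real.norm_of_nonneg (by positivity)]
    exact rpow_mul_rpow_le_max_rpow (norm_nonneg _) (norm_nonneg _) hp hq

lemma integrable_norm_rpow_sub_one_mul_norm_sq [NormedAddCommGroup E] [NormedAddCommGroup F]
    {r : ℝ} (hr : 1 ≤ r) {f : α → E} {g : α → F}
    (hf : MemLp f (ENNReal.ofReal (r + 1)) μ) (hg : MemLp g (ENNReal.ofReal (r + 1)) μ) :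
    Integrable (fun x => ‖f x‖ ^ (r - 1) * ‖g x‖ ^ 2) μ := by
  have hexp : r + 1 = (r - 1) + 2 := by ring
  rw [hexp] at hf hg
  simpa only [Real.rpow_two] using
    integrable_norm_rpow_mul_norm_rpow (sub_nonneg.2 hr) zero_le_two (by linarith) hf hg

variable [NormedAddCommGroup E] [InnerProductSpace ℝ E] {r : ℝ} {u v : α → E}

lemma integrable_inner_norm_rpow_smul_sub (hr : 1 ≤ r)
    (hu : MemLp u (ENNReal.ofReal (r + 1)) μ) (hv : MemLp v (ENNReal.ofReal (r + 1)) μ) :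
    Integrable (fun x => ⟪‖u x‖ ^ (r - 1) • u x - ‖v x‖ ^ (r - 1) • v x, u x - v x⟫) μ := by
  have hweight {f g : α → E} (hf : MemLp f (ENNReal.ofReal (r + 1)) μ)
      (hg : MemLp g (ENNReal.ofReal (r + 1)) μ) :
      Integrable (fun x => ‖f x‖ ^ (r - 1) * ‖g x‖ ^ 2) μ :=
    integrable_norm_rpow_sub_one_mul_norm_sq hr hf hg
  have hcross : Integrable
      (fun x => (‖u x‖ ^ (r - 1) - ‖v x‖ ^ (r - 1)) * (‖u x‖ ^ 2 - ‖v x‖ ^ 2)) μ := by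
    simp only [sub_mul, mul_sub]
    exact ((hweight hu hu).sub (hweight hv hu)).sub ((hweight hu hv).sub (hweight hv hv))
  have huv := hu.sub hv
  simp only [inner_smul_sub_smul_sub_eq]
  exact (((hweight hu huv).const_mul _).add ((hweight hv huv).const_mul _)).add
    (hcross.const_mul _)

theorem monotonicity_power_nonlinearity_general (hr : 1 ≤ r)
    (hu : MemLp u (ENNReal.ofReal (r + 1)) μ) (hv : MemLp v (ENNReal.ofReal (r + 1)) μ) :
    Integrable (fun x => ⟪‖u x‖ ^ (r - 1) • u x - ‖v x‖ ^ (r - 1) • v x, u x - v x⟫) μ ∧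
    (1 / 2) * ∫ x, ‖u x‖ ^ (r - 1) * ‖u x - v x‖ ^ 2 ∂μ +
        (1 / 2) * ∫ x, ‖v x‖ ^ (r - 1) * ‖u x - v x‖ ^ 2 ∂μ ≤
      ∫ x, ⟪‖u x‖ ^ (r - 1) • u x - ‖v x‖ ^ (r - 1) • v x, u x - v x⟫ ∂μ ∧
    0 ≤ (1 / 2) * ∫ x, ‖u x‖ ^ (r - 1) * ‖u x - v x‖ ^ 2 ∂μ +
        (1 / 2) * ∫ x, ‖v x‖ ^ (r - 1) * ‖u x - v x‖ ^ 2 ∂μ := by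
  have hinner := integrable_inner_norm_rpow_smul_sub hr hu hv
  have hu_weight := (integrable_norm_rpow_sub_one_mul_norm_sq hr hu (hu.sub hv)).const_mul (1 / 2)
  have hv_weight := (integrable_norm_rpow_sub_one_mul_norm_sq hr hv (hu.sub hv)).const_mul (1 / 2)
  refine ⟨hinner, ?_, by positivity⟩
  rw [← integral_const_mul, ← integral_const_mul]
  refine (integral_add hu_weight hv_weight).symm.trans_le ?_
  exact integral_mono (hu_weight.add hv_weight) hinner fun x =>
    le_inner_smul_sub_smul_sub_of_monotoneOn
      (Real.monotoneOn_rpow_Ici_of_exponent_nonneg (sub_nonneg.2 hr)) (u x) (v x)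

end Integral

/-- Strong monotonicity of `u ↦ |u|^{r-1}u` in integrated form: for
`u, v ∈ L^{r+1}(O; ℝ^d)`, the integrand `(|u|^{r-1}u − |v|^{r-1}v)·(u − v)` is
integrable and its integral dominates
`(1/2)∫|u|^{r-1}|u−v|² + (1/2)∫|v|^{r-1}|u−v|² ≥ 0`. -/
theorem monotonicity_power_nonlinearity {d : ℕ}
    (O : Set (EuclideanSpace ℝ (Fin d))) (hO : IsOpen O) (hOb : Bornology.IsBounded O)
    (r : ℝ) (hr : 1 ≤ r)
    (u v : EuclideanSpace ℝ (Fin d) → EuclideanSpace ℝ (Fin d))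
    (hu : MemLp u (ENNReal.ofReal (r + 1)) (volume.restrict O))
    (hv : MemLp v (ENNReal.ofReal (r + 1)) (volume.restrict O)) :
    Integrable
      (fun x => ⟪(‖u x‖ ^ (r - 1)) • u x - (‖v x‖ ^ (r - 1)) • v x, u x - v x⟫)
      (volume.restrict O) ∧
    (∫ x, ⟪(‖u x‖ ^ (r - 1)) • u x - (‖v x‖ ^ (r - 1)) • v x, u x - v x⟫
        ∂(volume.restrict O) ≥
      (1 / 2) * ∫ x, ‖u x‖ ^ (r - 1) * ‖u x - v x‖ ^ 2 ∂(volume.restrict O)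
        + (1 / 2) * ∫ x, ‖v x‖ ^ (r - 1) * ‖u x - v x‖ ^ 2 ∂(volume.restrict O)) ∧
    ((1 / 2) * ∫ x, ‖u x‖ ^ (r - 1) * ‖u x - v x‖ ^ 2 ∂(volume.restrict O)
        + (1 / 2) * ∫ x, ‖v x‖ ^ (r - 1) * ‖u x - v x‖ ^ 2 ∂(volume.restrict O) ≥ 0) :=
  monotonicity_power_nonlinearity_general hr hu hv
end

section
/- Let O be a bounded open subset of ℝ^d, let r ≥ 1 be real, and let u, v ∈ L^{r+1}(O; ℝ^d). Then ∫_O (|u|^{r−1}u − |v|^{r−1}v)·(u − v) dx ≥ (1/2^{r−1}) ‖u − v‖_{L^{r+1}(O;ℝ^d)}^{r+1}. -/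
open Filter Topology MeasureTheory
open scoped RealInnerProductSpace

/-!
For weights `α, β` ordered like `‖a‖, ‖b‖`, polarization and the triangle inequality give
`(α ‖a‖ + β ‖b‖) ‖a - b‖² ≤ (‖a‖ + ‖b‖) ⟪α a - β b, a - b⟫`.
With `α = ‖a‖ ^ (r - 1)` and `β = ‖b‖ ^ (r - 1)`, the power mean inequality bounds
`‖a‖ ^ r + ‖b‖ ^ r` from below by `(‖a‖ + ‖b‖) ^ r / 2 ^ (r - 1)`; cancelling `‖a‖ + ‖b‖` and using
`‖a - b‖ ≤ ‖a‖ + ‖b‖` once more yields the pointwise inequality with the constant `1 / 2 ^ (r - 1)`.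
It may be integrated because `‖u‖ ^ (r - 1) • u` lies in `L^{(r + 1) / r}`, whose exponent is
conjugate to `r + 1`.
-/

open scoped ENNReal

lemma rpow_sub_one_mul_self {x r : ℝ} (hx : 0 ≤ x) (hr : r ≠ 0) : x ^ (r - 1) * x = x ^ r := by
  rw [← Real.rpow_add_one' hx (by simpa using hr), sub_add_cancel]

lemma rpow_sub_rpow_mul_sub_nonneg {s x y : ℝ} (hs : 0 ≤ s) (hx : 0 ≤ x) (hy : 0 ≤ y) :
    0 ≤ (x ^ s - y ^ s) * (x - y) :=
  ((Real.monotoneOn_rpow_Ici_of_exponent_nonneg hs).monovaryOn monotoneOn_id).sub_mul_sub_nonneg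
    hy hx

section Pointwise

variable {E : Type*} [NormedAddCommGroup E] [InnerProductSpace ℝ E] {r : ℝ}

lemma two_mul_inner_smul_sub_smul_sub (α β : ℝ) (a b : E) :
    2 * ⟪α • a - β • b, a - b⟫ = (α + β) * ‖a - b‖ ^ 2 + (α - β) * (‖a‖ ^ 2 - ‖b‖ ^ 2) := by
  rw [norm_sub_sq_real]
  simp only [inner_sub_left, inner_sub_right, real_inner_smul_left, real_inner_self_eq_norm_sq,
    real_inner_comm a b]
  ring

lemma weighted_norm_add_mul_norm_sub_sq_le_inner {α β : ℝ} {a b : E}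
    (hαβ : 0 ≤ (α - β) * (‖a‖ - ‖b‖)) :
    (α * ‖a‖ + β * ‖b‖) * ‖a - b‖ ^ 2 ≤ (‖a‖ + ‖b‖) * ⟪α • a - β • b, a - b⟫ := by
  have norm_sub_sq_le : ‖a - b‖ ^ 2 ≤ (‖a‖ + ‖b‖) ^ 2 := by gcongr; exact norm_sub_le a b
  have weighted_norm_sub_sq_le := mul_le_mul_of_nonneg_left norm_sub_sq_le hαβ
  linear_combination (1 / 2) * weighted_norm_sub_sq_le
    - (1 / 2) * (‖a‖ + ‖b‖) * two_mul_inner_smul_sub_smul_sub α β a b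

lemma norm_add_norm_rpow_mul_norm_sub_sq_le_inner (hr : 1 ≤ r) (a b : E) :
    1 / 2 ^ (r - 1) * (‖a‖ + ‖b‖) ^ (r - 1) * ‖a - b‖ ^ 2 ≤
      ⟪‖a‖ ^ (r - 1) • a - ‖b‖ ^ (r - 1) • b, a - b⟫ := by
  have hr₀ : r ≠ 0 := by positivity
  rcases (add_nonneg (norm_nonneg a) (norm_nonneg b)).eq_or_lt with hsum | hsum
  · obtain ⟨ha, hb⟩ := (add_eq_zero_iff_of_nonneg (norm_nonneg a) (norm_nonneg b)).1 hsum.symm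
    simp [norm_eq_zero.1 ha, norm_eq_zero.1 hb]
  have power_mean : (‖a‖ + ‖b‖) ^ r ≤ 2 ^ (r - 1) * (‖a‖ ^ r + ‖b‖ ^ r) :=
    mod_cast NNReal.rpow_add_le_mul_rpow_add_rpow ‖a‖₊ ‖b‖₊ hr
  refine le_of_mul_le_mul_left ?_ hsum
  calc (‖a‖ + ‖b‖) * (1 / 2 ^ (r - 1) * (‖a‖ + ‖b‖) ^ (r - 1) * ‖a - b‖ ^ 2)
      = (‖a‖ + ‖b‖) ^ r / 2 ^ (r - 1) * ‖a - b‖ ^ 2 := by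
        rw [← rpow_sub_one_mul_self hsum.le hr₀]; ring
    _ ≤ (‖a‖ ^ r + ‖b‖ ^ r) * ‖a - b‖ ^ 2 := by
        gcongr
        exact (div_le_iff₀' (by positivity)).2 power_mean
    _ = (‖a‖ ^ (r - 1) * ‖a‖ + ‖b‖ ^ (r - 1) * ‖b‖) * ‖a - b‖ ^ 2 := by
        rw [rpow_sub_one_mul_self (norm_nonneg a) hr₀, rpow_sub_one_mul_self (norm_nonneg b) hr₀]
    _ ≤ (‖a‖ + ‖b‖) * ⟪‖a‖ ^ (r - 1) • a - ‖b‖ ^ (r - 1) • b, a - b⟫ :=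
        weighted_norm_add_mul_norm_sub_sq_le_inner <|
          rpow_sub_rpow_mul_sub_nonneg (sub_nonneg.2 hr) (norm_nonneg a) (norm_nonneg b)

lemma norm_sub_rpow_le_inner_norm_rpow_smul_sub (hr : 1 ≤ r) (a b : E) :
    1 / 2 ^ (r - 1) * ‖a - b‖ ^ (r + 1) ≤
      ⟪‖a‖ ^ (r - 1) • a - ‖b‖ ^ (r - 1) • b, a - b⟫ :=
  calc 1 / 2 ^ (r - 1) * ‖a - b‖ ^ (r + 1)
      = 1 / 2 ^ (r - 1) * ‖a - b‖ ^ (r - 1) * ‖a - b‖ ^ 2 := by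
        rw [mul_assoc, ← Real.rpow_add_natCast' (norm_nonneg _) (by push_cast; linarith)]
        congr 2
        push_cast
        ring
    _ ≤ 1 / 2 ^ (r - 1) * (‖a‖ + ‖b‖) ^ (r - 1) * ‖a - b‖ ^ 2 := by
        gcongr
        exact norm_sub_le a b
    _ ≤ _ := norm_add_norm_rpow_mul_norm_sub_sq_le_inner hr a b

end Pointwise

section Integral

lemma holderConjugate_ofReal_add_one_div {r : ℝ} (hr : 0 ≤ r) :
    ENNReal.HolderConjugate (ENNReal.ofReal (r + 1) / ENNReal.ofReal r)
      (ENNReal.ofReal (r + 1)) := by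
  have hp : ENNReal.ofReal (r + 1) ≠ 0 := (ENNReal.ofReal_pos.2 (by positivity)).ne'
  have ofReal_add_one : ENNReal.ofReal r + 1 = ENNReal.ofReal (r + 1) := by
    rw [ENNReal.ofReal_add hr zero_le_one, ENNReal.ofReal_one]
  rw [ENNReal.holderConjugate_iff, ENNReal.inv_div (.inl ENNReal.ofReal_ne_top) (.inr hp),
    ← one_div, ← ENNReal.add_div, ofReal_add_one, ENNReal.div_self hp ENNReal.ofReal_ne_top]

variable {X E : Type*} [MeasurableSpace X] {μ : Measure X} [NormedAddCommGroup E] {r : ℝ}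

lemma memLp_norm_rpow_sub_one_smul [NormedSpace ℝ E] {f : X → E} {p : ℝ≥0∞} (hr : 0 < r)
    (hf : MemLp f p μ) :
    MemLp (fun x ↦ ‖f x‖ ^ (r - 1) • f x) (p / ENNReal.ofReal r) μ := by
  have norm_rpow_memLp : MemLp (fun x ↦ ‖f x‖ ^ r) (p / ENNReal.ofReal r) μ := by
    simpa only [ENNReal.toReal_ofReal hr.le] using hf.norm_rpow_div (ENNReal.ofReal r)
  have measurable_smul : AEStronglyMeasurable (fun x ↦ ‖f x‖ ^ (r - 1) • f x) μ :=
    (hf.1.norm.aemeasurable.pow_const _).aestronglyMeasurable.smul hf.1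
  refine norm_rpow_memLp.congr_norm measurable_smul (ae_of_all μ fun x ↦ ?_)
  rw [norm_smul, Real.norm_of_nonneg (by positivity), Real.norm_of_nonneg (by positivity),
    rpow_sub_one_mul_self (norm_nonneg _) hr.ne']

variable [InnerProductSpace ℝ E] {u v : X → E}

lemma integrable_inner_norm_rpow_smul (hr : 0 < r)
    (hu : MemLp u (ENNReal.ofReal (r + 1)) μ) (hv : MemLp v (ENNReal.ofReal (r + 1)) μ) :
    Integrable (fun x ↦ ⟪‖u x‖ ^ (r - 1) • u x, v x⟫) μ :=
  have := holderConjugate_ofReal_add_one_div hr.le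
  memLp_one_iff_integrable.1 <|
    (innerSL ℝ).memLp_of_bilin 1 (memLp_norm_rpow_sub_one_smul hr hu) hv

theorem strong_monotonicity_power_nonlinearity_general (hr : 1 ≤ r)
    (hu : MemLp u (ENNReal.ofReal (r + 1)) μ) (hv : MemLp v (ENNReal.ofReal (r + 1)) μ) :
    1 / 2 ^ (r - 1) * ∫ x, ‖u x - v x‖ ^ (r + 1) ∂μ ≤
      ∫ x, ⟪‖u x‖ ^ (r - 1) • u x - ‖v x‖ ^ (r - 1) • v x, u x - v x⟫ ∂μ := by
  have hr₁ : 0 < r + 1 := by linarith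
  have integrable_norm_sub_rpow : Integrable (fun x ↦ ‖u x - v x‖ ^ (r + 1)) μ := by
    simpa only [Pi.sub_apply, ENNReal.toReal_ofReal hr₁.le] using
      (hu.sub hv).integrable_norm_rpow (ENNReal.ofReal_pos.2 hr₁).ne' ENNReal.ofReal_ne_top
  have integrable_inner_sub :
      Integrable (fun x ↦ ⟪‖u x‖ ^ (r - 1) • u x - ‖v x‖ ^ (r - 1) • v x, u x - v x⟫) μ := by
    have hr₀ : 0 < r := zero_lt_one.trans_le hr
    simp only [inner_sub_left]
    exact (integrable_inner_norm_rpow_smul hr₀ hu (hu.sub hv)).sub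
      (integrable_inner_norm_rpow_smul hr₀ hv (hu.sub hv))
  rw [← integral_const_mul]
  exact integral_mono (integrable_norm_sub_rpow.const_mul _) integrable_inner_sub fun x ↦
    norm_sub_rpow_le_inner_norm_rpow_smul_sub hr (u x) (v x)

end Integral

/-- Strong monotonicity of `u ↦ |u|^{r-1}u`: for `u, v ∈ L^{r+1}(O; ℝ^d)`,
`∫ (|u|^{r-1}u − |v|^{r-1}v)·(u − v) ≥ (1/2^{r-1}) ‖u − v‖_{L^{r+1}}^{r+1}`,
where `‖u − v‖_{L^{r+1}}^{r+1} = ∫ |u − v|^{r+1}`. -/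
theorem strong_monotonicity_power_nonlinearity {d : ℕ}
    (O : Set (EuclideanSpace ℝ (Fin d))) (hO : IsOpen O) (hOb : Bornology.IsBounded O)
    (r : ℝ) (hr : 1 ≤ r)
    (u v : EuclideanSpace ℝ (Fin d) → EuclideanSpace ℝ (Fin d))
    (hu : MemLp u (ENNReal.ofReal (r + 1)) (volume.restrict O))
    (hv : MemLp v (ENNReal.ofReal (r + 1)) (volume.restrict O)) :
    ∫ x, ⟪(‖u x‖ ^ (r - 1)) • u x - (‖v x‖ ^ (r - 1)) • v x, u x - v x⟫
        ∂(volume.restrict O) ≥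
      (1 / 2 ^ (r - 1)) * ∫ x, ‖u x - v x‖ ^ (r + 1) ∂(volume.restrict O) :=
  strong_monotonicity_power_nonlinearity_general hr hu hv
end

section
/- Let (Ω, μ) be a measure space, let f, g : Ω → [0, ∞) be measurable, let 1 < q < r be real numbers, let κ ∈ ℝ, and let β > 0. If ∫_Ω f^{r−1}g² dμ < ∞ and ∫_Ω g² dμ < ∞, then |κ| q 2^{q−1} ∫_Ω f^{q−1}g² dμ ≤ (β/4)∫_Ω f^{r−1}g² dμ + ϱ_{1,r} ∫_Ω g² dμ, where ϱ_{1,r} = ((r−q)/(r−1)) · (4(q−1)/(β(r−1)))^{(q−1)/(r−q)} · (|κ| q 2^{q−1})^{(r−1)/(r−q)}. -/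
open MeasureTheory

/-!
The inequality holds pointwise before integration: writing `A = |κ| q 2^{q-1}`, Young's inequality
with the conjugate exponents `(r-1)/(q-1)` and `(r-1)/(r-q)`, applied to the product of `t^{q-1}`
and `A`, bounds `A t^{q-1}` by `ε t^{r-1} + C`. Rescaling the two factors by inverse constants
makes the first coefficient equal to `ε = β/4`. Put `t = f x`, multiply by the weight `g²` and
integrate.
-/

theorem scaled_young_inequality_of_nonneg {p q x y δ : ℝ} (hpq : p.HolderConjugate q)
    (hx : 0 ≤ x) (hy : 0 ≤ y) (hδ : 0 < δ) :
    x * y ≤ x ^ p / (δ * p) + δ ^ (q - 1) * y ^ q / q := by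
  have hp : p ≠ 0 := hpq.ne_zero
  have hexp : p⁻¹ * q = q - 1 := by
    rw [← hpq.symm.one_sub_inv, sub_mul, one_mul, inv_mul_cancel₀ hpq.symm.ne_zero]
  have hleft : ((δ ^ p⁻¹)⁻¹ * x) ^ p = δ⁻¹ * x ^ p := by
    rw [Real.mul_rpow (by positivity) hx, Real.inv_rpow (by positivity),
      Real.rpow_inv_rpow hδ.le hp]
  have hright : (δ ^ p⁻¹ * y) ^ q = δ ^ (q - 1) * y ^ q := by
    rw [Real.mul_rpow (by positivity) hy, ← Real.rpow_mul hδ.le, hexp]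
  calc x * y = ((δ ^ p⁻¹)⁻¹ * x) * (δ ^ p⁻¹ * y) := by field_simp
    _ ≤ ((δ ^ p⁻¹)⁻¹ * x) ^ p / p + (δ ^ p⁻¹ * y) ^ q / q :=
      Real.young_inequality_of_nonneg (by positivity) (by positivity) hpq
    _ = x ^ p / (δ * p) + δ ^ (q - 1) * y ^ q / q := by
      rw [hleft, hright]
      field_simp

section PowerAbsorption

variable {a b A ε : ℝ}

theorem const_mul_rpow_le_mul_rpow_add {t : ℝ} (ha : 0 < a) (hab : a < b) (hA : 0 ≤ A)
    (hε : 0 < ε) (ht : 0 ≤ t) :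
    A * t ^ a ≤ ε * t ^ b +
      (b - a) / b * (a / (ε * b)) ^ (a / (b - a)) * A ^ (b / (b - a)) := by
  have hb : 0 < b := ha.trans hab
  have hba : 0 < b - a := sub_pos.2 hab
  have hconj : (b / a).HolderConjugate (b / (b - a)) := by
    rw [Real.holderConjugate_iff, one_lt_div ha]
    refine ⟨hab, ?_⟩
    field_simp
    ring
  have hpow : (t ^ a) ^ (b / a) = t ^ b := by
    rw [← Real.rpow_mul ht, mul_div_cancel₀ b ha.ne']
  have hexp : b / (b - a) - 1 = a / (b - a) := by
    field_simp
    ring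
  -- The scale `a / (ε * b)` is the one whose product with the exponent `b / a` is `ε⁻¹`.
  calc A * t ^ a = t ^ a * A := mul_comm _ _
    _ ≤ t ^ b / (a / (ε * b) * (b / a)) +
        (a / (ε * b)) ^ (a / (b - a)) * A ^ (b / (b - a)) / (b / (b - a)) := by
      rw [← hpow, ← hexp]
      exact scaled_young_inequality_of_nonneg hconj (Real.rpow_nonneg ht a) hA (by positivity)
    _ = ε * t ^ b +
        (b - a) / b * (a / (ε * b)) ^ (a / (b - a)) * A ^ (b / (b - a)) := by
      field_simp

variable {Ω : Type*} [MeasurableSpace Ω] {μ : Measure Ω} {f w : Ω → ℝ}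

theorem const_mul_rpow_mul_ae_le (ha : 0 < a) (hab : a < b) (hA : 0 ≤ A) (hε : 0 < ε)
    (hf : 0 ≤ᵐ[μ] f) (hw : 0 ≤ᵐ[μ] w) :
    ∀ᵐ x ∂μ, A * (f x ^ a * w x) ≤ ε * (f x ^ b * w x) +
      (b - a) / b * (a / (ε * b)) ^ (a / (b - a)) * A ^ (b / (b - a)) * w x := by
  filter_upwards [hf, hw] with x hfx hwx
  have hmul := mul_le_mul_of_nonneg_right (const_mul_rpow_le_mul_rpow_add ha hab hA hε hfx) hwx
  linarith

theorem aestronglyMeasurable_rpow_mul_of_ne_zero (hb : b ≠ 0) (hf : 0 ≤ᵐ[μ] f) (hw : 0 ≤ᵐ[μ] w)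
    (hfw : AEStronglyMeasurable (fun x => f x ^ b * w x) μ) (hwm : AEStronglyMeasurable w μ) :
    AEStronglyMeasurable (fun x => f x ^ a * w x) μ := by
  have hmean : AEMeasurable (fun x => (f x ^ b * w x) ^ (a / b) * w x ^ (1 - a / b)) μ :=
    (hfw.aemeasurable.pow_const _).mul (hwm.aemeasurable.pow_const _)
  refine hmean.aestronglyMeasurable.congr ?_
  filter_upwards [hf, hw] with x hfx hwx
  rw [Real.mul_rpow (Real.rpow_nonneg hfx b) hwx, ← Real.rpow_mul hfx, mul_div_cancel₀ a hb,
    mul_assoc, ← Real.rpow_add' hwx (by simp), add_sub_cancel, Real.rpow_one]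

theorem integrable_rpow_mul_of_lt (ha : 0 < a) (hab : a < b)
    (hf : 0 ≤ᵐ[μ] f) (hw : 0 ≤ᵐ[μ] w)
    (hfw : Integrable (fun x => f x ^ b * w x) μ) (hwi : Integrable w μ) :
    Integrable (fun x => f x ^ a * w x) μ := by
  have hb : b ≠ 0 := (ha.trans hab).ne'
  have hnonneg : ∀ᵐ x ∂μ, 0 ≤ f x ^ a * w x := by
    filter_upwards [hf, hw] with x hfx hwx using mul_nonneg (Real.rpow_nonneg hfx a) hwx
  have hle := const_mul_rpow_mul_ae_le ha hab zero_le_one zero_lt_one hf hw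
  simp only [one_mul] at hle
  exact integrable_of_le_of_le (aestronglyMeasurable_rpow_mul_of_ne_zero hb hf hw hfw.1 hwi.1)
    hnonneg hle (integrable_zero Ω ℝ μ) (hfw.add (hwi.const_mul _))

theorem const_mul_integral_rpow_mul_le (ha : 0 < a) (hab : a < b) (hA : 0 ≤ A) (hε : 0 < ε)
    (hf : 0 ≤ᵐ[μ] f) (hw : 0 ≤ᵐ[μ] w)
    (hfw : Integrable (fun x => f x ^ b * w x) μ) (hwi : Integrable w μ) :
    A * ∫ x, f x ^ a * w x ∂μ ≤ ε * (∫ x, f x ^ b * w x ∂μ) +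
      (b - a) / b * (a / (ε * b)) ^ (a / (b - a)) * A ^ (b / (b - a)) * ∫ x, w x ∂μ := by
  rw [← integral_const_mul, ← integral_const_mul, ← integral_const_mul,
    ← integral_add (hfw.const_mul _) (hwi.const_mul _)]
  exact integral_mono_ae ((integrable_rpow_mul_of_lt ha hab hf hw hfw hwi).const_mul A)
    ((hfw.const_mul _).add (hwi.const_mul _)) (const_mul_rpow_mul_ae_le ha hab hA hε hf hw)

end PowerAbsorption

/-- Young-type inequality: for measurable `f, g ≥ 0`, `1 < q < r`, `κ ∈ ℝ`, `β > 0`, if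
`∫ f^{r−1}g² < ∞` and `∫ g² < ∞`, then
`|κ| q 2^{q−1} ∫ f^{q−1}g² ≤ (β/4)∫ f^{r−1}g² + ϱ_{1,r} ∫ g²` with
`ϱ_{1,r} = ((r−q)/(r−1)) (4(q−1)/(β(r−1)))^{(q−1)/(r−q)} (|κ| q 2^{q−1})^{(r−1)/(r−q)}`. -/
theorem young_power_weight {Ω : Type*} [MeasurableSpace Ω] (μ : Measure Ω)
    (f g : Ω → ℝ) (hfm : Measurable f) (hgm : Measurable g)
    (hf0 : ∀ x, 0 ≤ f x) (hg0 : ∀ x, 0 ≤ g x)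
    (q r : ℝ) (hq : 1 < q) (hqr : q < r) (κ β : ℝ) (hβ : 0 < β)
    (h1 : Integrable (fun x => f x ^ (r - 1) * g x ^ 2) μ)
    (h2 : Integrable (fun x => g x ^ 2) μ) :
    |κ| * q * 2 ^ (q - 1) * ∫ x, f x ^ (q - 1) * g x ^ 2 ∂μ ≤
      (β / 4) * (∫ x, f x ^ (r - 1) * g x ^ 2 ∂μ)
        + (((r - q) / (r - 1)) * (4 * (q - 1) / (β * (r - 1))) ^ ((q - 1) / (r - q))
            * (|κ| * q * 2 ^ (q - 1)) ^ ((r - 1) / (r - q))) * (∫ x, g x ^ 2 ∂μ) := by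
  have hA : 0 ≤ |κ| * q * 2 ^ (q - 1) := by positivity
  have hscale : 4 * (q - 1) / (β * (r - 1)) = (q - 1) / (β / 4 * (r - 1)) := by field_simp
  rw [hscale, ← sub_sub_sub_cancel_right r q 1]
  exact const_mul_integral_rpow_mul_le (sub_pos.2 hq) (sub_lt_sub_right hqr 1) hA (by positivity)
    (ae_of_all μ hf0) (ae_of_all μ fun x => sq_nonneg (g x)) h1 h2
end
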